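/- Let T : M₀ → M₀ be any mapping on the set of all probability distributions on ℝ. Then T commutes with the utility transform T^u for every increasing left-continuous u : ℝ → ℝ if and only if there exists a right-continuous distortion function d with d(0+)=0 and d(1−)=1 (i.e., d ∈ F_D^R ∩ F̂_D) such that T = T_d. -/

import Mathlib

/-!
For increasing left-continuous `u`, each set `{u ≤ x}` is `∅`, `ℝ` or a half-line `(-∞, a]`, so
`T^u F x` is `0`, `1` or `F a`, where the case and the value of `a` do not depend on `F`. If `d` is
right-continuous, then `T_d F = d ∘ F`, and applying `d` pointwise commutes with `T^u` because `d`
fixes `0` and `1`.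

Conversely, let `L` be the logistic cdf (`Real.sigmoid`). By the Galois connection between a cdf
`F` and its left quantile function, `u = F_L⁻¹ ∘ L` is increasing and left-continuous with
`{u ≤ x} = {L ≤ F x}`, that is, `T^u G = (T^L G) ∘ F` for every cdf `G`. Now `T^L L` is the uniform
cdf, the identity on `[0, 1]`, so `F = T^u L`. If `T` commutes with `T^u`, then
`T F = T^u (T L) = d ∘ F` with `d = T^L (T L)`. Quantiles are composed with `L`, rather than applied
to the uniform distribution directly, because an unbounded `F_L⁻¹` on `(0, 1)` has no real-valued
increasing extension to `ℝ`.
-/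

open MeasureTheory Filter Topology Set

noncomputable section

/-- The set of cdfs of compactly supported probability distributions on ℝ:
increasing, right-continuous, equal to `0` for all sufficiently small `x` and
equal to `1` for all sufficiently large `x`. -/
def mSet : Set (ℝ → ℝ) :=
  {F | Monotone F ∧ (∀ x, ContinuousWithinAt F (Set.Ici x) x) ∧
    (∃ a, ∀ x ≤ a, F x = 0) ∧ (∃ b, ∀ x, b ≤ x → F x = 1)}

/-- The set of cdfs of all probability distributions on ℝ: increasing,
right-continuous, with limit `0` at `-∞` and limit `1` at `+∞`. -/
def m0Set : Set (ℝ → ℝ) :=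
  {F | Monotone F ∧ (∀ x, ContinuousWithinAt F (Set.Ici x) x) ∧
    Tendsto F atBot (𝓝 0) ∧ Tendsto F atTop (𝓝 1)}

/-- A utility function: increasing (non-strict) and continuous. -/
def IsUF (u : ℝ → ℝ) : Prop := Monotone u ∧ Continuous u

/-- An increasing and left-continuous function on ℝ. -/
def IsLeftCtsIncr (u : ℝ → ℝ) : Prop :=
  Monotone u ∧ ∀ x, ContinuousWithinAt u (Set.Iic x) x

/-- A distortion function: an increasing function `d : [0,1] → [0,1]` with
`d 0 = 0` and `d 1 = 1` (values outside `[0,1]` are irrelevant). -/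
def IsDF (d : ℝ → ℝ) : Prop :=
  MonotoneOn d (Set.Icc 0 1) ∧ d 0 = 0 ∧ d 1 = 1

/-- Right-continuity of a distortion function on `[0,1)`. -/
def DFRightCts (d : ℝ → ℝ) : Prop :=
  ∀ x ∈ Set.Ico (0:ℝ) 1, ContinuousWithinAt d (Set.Ioi x) x

/-- A distortion function with moreover `d(0+) = 0` and `d(1-) = 1`. -/
def IsDFhat (d : ℝ → ℝ) : Prop :=
  IsDF d ∧ Tendsto d (𝓝[>] (0:ℝ)) (𝓝 0) ∧ Tendsto d (𝓝[<] (1:ℝ)) (𝓝 1)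

/-- The probability distortion generated by `d`:  `T_d F x = (d ∘ F)(x+)`,
the right limit of `d ∘ F` at `x`. -/
noncomputable def distortT (d F : ℝ → ℝ) : ℝ → ℝ :=
  fun x => Function.rightLim (d ∘ F) x

/-- The utility transform `T^u`: it maps a cdf `F` to the cdf of the
pushforward under `u` of the probability measure with cdf `F`. -/
noncomputable def utilityT (u F : ℝ → ℝ) : ℝ → ℝ := by
  classical
  exact
    if h : Monotone F ∧ ∀ x, ContinuousWithinAt F (Set.Ici x) x then
      fun x => ((StieltjesFunction.measure ⟨F, h.1, h.2⟩).map u (Set.Iic x)).toReal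
    else F

/-- Left quantile `F_L^{-1}(p) = inf {x | F x ≥ p}`. -/
noncomputable def leftQ (F : ℝ → ℝ) (p : ℝ) : ℝ := sInf {x | p ≤ F x}

/-- Right quantile `F_R^{-1}(p) = inf {x | F x > p}`. -/
noncomputable def rightQ (F : ℝ → ℝ) (p : ℝ) : ℝ := sInf {x | p < F x}

open ProbabilityTheory

section Order

variable {α β : Type*}

lemma lowerSemicontinuous_iff_continuousWithinAt_Iic_of_monotone [LinearOrder α]
    [TopologicalSpace α] [Preorder β] [TopologicalSpace β] [OrderTopology β] {f : α → β}
    (hf : Monotone f) : LowerSemicontinuous f ↔ ∀ x, ContinuousWithinAt f (Iic x) x := by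
  refine ⟨fun h x => tendsto_order.2 ⟨fun a ha => ?_, fun b hb => ?_⟩, fun h x a ha => ?_⟩
  · exact (h x a ha).filter_mono nhdsWithin_le_nhds
  · filter_upwards [self_mem_nhdsWithin] with z hz using (hf hz).trans_lt hb
  · rw [← nhdsLE_sup_nhdsGE, eventually_sup]
    refine ⟨(tendsto_order.1 (h x)).1 a ha, ?_⟩
    filter_upwards [self_mem_nhdsWithin] with z hz using ha.trans_le (hf hz)

lemma upperSemicontinuous_iff_continuousWithinAt_Ici_of_monotone [LinearOrder α]
    [TopologicalSpace α] [Preorder β] [TopologicalSpace β] [OrderTopology β] {f : α → β}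
    (hf : Monotone f) : UpperSemicontinuous f ↔ ∀ x, ContinuousWithinAt f (Ici x) x :=
  lowerSemicontinuous_iff_continuousWithinAt_Iic_of_monotone (α := αᵒᵈ) (β := βᵒᵈ) hf.dual

lemma eq_empty_or_univ_or_Iic_of_isLowerSet [ConditionallyCompleteLinearOrder α]
    [TopologicalSpace α] [OrderTopology α] {s : Set α} (hs : IsLowerSet s) (hc : IsClosed s) :
    s = ∅ ∨ s = univ ∨ ∃ a, s = Iic a := by
  rcases s.eq_empty_or_nonempty with hempty | hne
  · exact .inl hempty
  by_cases hb : BddAbove s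
  · have hmax := hc.isGreatest_csSup hne hb
    exact .inr (.inr ⟨sSup s, Subset.antisymm (fun _ hy => hmax.2 hy) (hs.Iic_subset hmax.1)⟩)
  · refine .inr (.inl (eq_univ_of_forall fun y => ?_))
    obtain ⟨z, hz, hyz⟩ := not_bddAbove_iff.1 hb y
    exact hs hyz.le hz

end Order

lemma isLeftCtsIncr_iff {u : ℝ → ℝ} : IsLeftCtsIncr u ↔ Monotone u ∧ LowerSemicontinuous u :=
  and_congr_right fun hu => (lowerSemicontinuous_iff_continuousWithinAt_Iic_of_monotone hu).symm

section Cdf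

variable {F v : ℝ → ℝ} {p x : ℝ}

lemma cdf_mem_m0Set (μ : Measure ℝ) : ⇑(cdf μ) ∈ m0Set :=
  ⟨monotone_cdf μ, (cdf μ).right_continuous, tendsto_cdf_atBot μ, tendsto_cdf_atTop μ⟩

lemma exists_cdf_eq_of_mem_m0Set (hF : F ∈ m0Set) :
    ∃ μ : Measure ℝ, IsProbabilityMeasure μ ∧ ⇑(cdf μ) = F :=
  let f : StieltjesFunction ℝ := ⟨F, hF.1, hF.2.1⟩
  ⟨f.measure, f.isProbabilityMeasure hF.2.2.1 hF.2.2.2,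
    congrArg _ (cdf_measure_stieltjesFunction f hF.2.2.1 hF.2.2.2)⟩

lemma mem_Icc_of_mem_m0Set (hF : F ∈ m0Set) (x : ℝ) : F x ∈ Icc 0 1 :=
  ⟨hF.1.le_of_tendsto hF.2.2.1 x, hF.1.ge_of_tendsto hF.2.2.2 x⟩

lemma sigmoid_mem_m0Set : Real.sigmoid ∈ m0Set :=
  ⟨Real.sigmoid_monotone, fun _ => continuous_sigmoid.continuousWithinAt,
    Real.tendsto_sigmoid_atBot, Real.tendsto_sigmoid_atTop⟩

lemma leftQ_le_iff (hF : F ∈ m0Set) (hp : p ∈ Ioo 0 1) : leftQ F p ≤ x ↔ p ≤ F x := by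
  have hne : {y | p ≤ F y}.Nonempty := (hF.2.2.2.eventually (eventually_ge_nhds hp.2)).exists
  have hbdd : BddBelow {y | p ≤ F y} := by
    obtain ⟨b, hb⟩ := (hF.2.2.1.eventually (eventually_lt_nhds hp.1)).exists
    exact ⟨b, fun y hy => (hF.1.reflect_lt (hb.trans_le hy)).le⟩
  have hclosed : IsClosed {y | p ≤ F y} :=
    ((upperSemicontinuous_iff_continuousWithinAt_Ici_of_monotone hF.1).2 hF.2.1).isClosed_preimage p
  exact ⟨fun h => (hclosed.csInf_mem hne hbdd).trans (hF.1 h), fun h => csInf_le hbdd h⟩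

lemma preimage_leftQ_comp_Iic (hF : F ∈ m0Set) (hv : ∀ y, v y ∈ Ioo 0 1) (x : ℝ) :
    (leftQ F ∘ v) ⁻¹' Iic x = v ⁻¹' Iic (F x) :=
  ext fun y => leftQ_le_iff hF (hv y)

lemma monotoneOn_leftQ (hF : F ∈ m0Set) : MonotoneOn (leftQ F) (Ioo 0 1) :=
  fun _ hp _ hq hpq => (leftQ_le_iff hF hp).2 (hpq.trans ((leftQ_le_iff hF hq).1 le_rfl))

lemma monotone_leftQ_comp (hF : F ∈ m0Set) (hv : Monotone v) (hv01 : ∀ y, v y ∈ Ioo 0 1) :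
    Monotone (leftQ F ∘ v) :=
  fun y z hyz => monotoneOn_leftQ hF (hv01 y) (hv01 z) (hv hyz)

lemma isLeftCtsIncr_leftQ_comp (hF : F ∈ m0Set) (hv : IsLeftCtsIncr v)
    (hv01 : ∀ y, v y ∈ Ioo 0 1) : IsLeftCtsIncr (leftQ F ∘ v) := by
  rw [isLeftCtsIncr_iff] at hv ⊢
  refine ⟨monotone_leftQ_comp hF hv.1 hv01,
    lowerSemicontinuous_iff_isClosed_preimage.2 fun x => ?_⟩
  rw [preimage_leftQ_comp_Iic hF hv01]
  exact hv.2.isClosed_preimage (F x)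

end Cdf

section UtilityTransform

variable {F G u v : ℝ → ℝ} {a x : ℝ}

lemma utilityT_cdf (μ : Measure ℝ) [IsProbabilityMeasure μ] (hu : Measurable u) :
    utilityT u (cdf μ) = cdf (μ.map u) := by
  have := Measure.isProbabilityMeasure_map (μ := μ) hu.aemeasurable
  ext x
  rw [utilityT, dif_pos ⟨monotone_cdf μ, (cdf μ).right_continuous⟩, cdf_eq_real, Measure.real]
  exact congrArg (fun ν : Measure ℝ => (ν.map u (Iic x)).toReal) (measure_cdf μ)

lemma utilityT_cdf_apply (μ : Measure ℝ) [IsProbabilityMeasure μ] (hu : Measurable u) (x : ℝ) :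
    utilityT u (cdf μ) x = μ.real (u ⁻¹' Iic x) := by
  have := Measure.isProbabilityMeasure_map (μ := μ) hu.aemeasurable
  rw [utilityT_cdf μ hu, cdf_eq_real, map_measureReal_apply hu measurableSet_Iic]

lemma utilityT_mem_m0Set (hF : F ∈ m0Set) (hu : Measurable u) : utilityT u F ∈ m0Set := by
  obtain ⟨μ, _, rfl⟩ := exists_cdf_eq_of_mem_m0Set hF
  exact utilityT_cdf μ hu ▸ cdf_mem_m0Set _

lemma utilityT_eq_zero (hF : F ∈ m0Set) (hu : Measurable u) (h : u ⁻¹' Iic x = ∅) :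
    utilityT u F x = 0 := by
  obtain ⟨μ, _, rfl⟩ := exists_cdf_eq_of_mem_m0Set hF
  rw [utilityT_cdf_apply μ hu, h, measureReal_empty]

lemma utilityT_eq_one (hF : F ∈ m0Set) (hu : Measurable u) (h : u ⁻¹' Iic x = univ) :
    utilityT u F x = 1 := by
  obtain ⟨μ, _, rfl⟩ := exists_cdf_eq_of_mem_m0Set hF
  rw [utilityT_cdf_apply μ hu, h, probReal_univ]

lemma utilityT_eq_of_preimage_eq_Iic (hF : F ∈ m0Set) (hu : Measurable u)
    (h : u ⁻¹' Iic x = Iic a) : utilityT u F x = F a := by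
  obtain ⟨μ, _, rfl⟩ := exists_cdf_eq_of_mem_m0Set hF
  rw [utilityT_cdf_apply μ hu, h, cdf_eq_real]

lemma utilityT_apply_of_strictMono (hF : F ∈ m0Set) (hu : StrictMono u) (y : ℝ) :
    utilityT u F (u y) = F y :=
  utilityT_eq_of_preimage_eq_Iic hF hu.monotone.measurable (ext fun _ => hu.le_iff_le)

lemma utilityT_comp {d : ℝ → ℝ} (hd0 : d 0 = 0) (hd1 : d 1 = 1) (hu : IsLeftCtsIncr u)
    (hF : F ∈ m0Set) (hdF : d ∘ F ∈ m0Set) : utilityT u (d ∘ F) = d ∘ utilityT u F := by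
  ext x
  have hum : Measurable u := hu.1.measurable
  have hclosed : IsClosed (u ⁻¹' Iic x) := (isLeftCtsIncr_iff.1 hu).2.isClosed_preimage x
  rcases eq_empty_or_univ_or_Iic_of_isLowerSet ((isLowerSet_Iic x).preimage hu.1) hclosed
    with h | h | ⟨a, h⟩
  · rw [Function.comp_apply, utilityT_eq_zero hF hum h, utilityT_eq_zero hdF hum h, hd0]
  · rw [Function.comp_apply, utilityT_eq_one hF hum h, utilityT_eq_one hdF hum h, hd1]
  · rw [Function.comp_apply, utilityT_eq_of_preimage_eq_Iic hF hum h,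
      utilityT_eq_of_preimage_eq_Iic hdF hum h, Function.comp_apply]

lemma utilityT_leftQ_comp (hF : F ∈ m0Set) (hG : G ∈ m0Set) (hv : Monotone v)
    (hv01 : ∀ y, v y ∈ Ioo 0 1) : utilityT (leftQ F ∘ v) G = utilityT v G ∘ F := by
  obtain ⟨μ, _, rfl⟩ := exists_cdf_eq_of_mem_m0Set hG
  ext x
  rw [utilityT_cdf_apply μ (monotone_leftQ_comp hF hv hv01).measurable,
    preimage_leftQ_comp_Iic hF hv01, Function.comp_apply, utilityT_cdf_apply μ hv.measurable]

end UtilityTransform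

section Logistic

variable {F G : ℝ → ℝ} {p : ℝ}

lemma isLeftCtsIncr_sigmoid : IsLeftCtsIncr Real.sigmoid :=
  ⟨Real.sigmoid_monotone, fun _ => continuous_sigmoid.continuousWithinAt⟩

lemma sigmoid_mem_Ioo (y : ℝ) : Real.sigmoid y ∈ Ioo 0 1 :=
  ⟨Real.sigmoid_pos y, Real.sigmoid_lt_one y⟩

lemma utilityT_sigmoid_zero (hG : G ∈ m0Set) : utilityT Real.sigmoid G 0 = 0 :=
  utilityT_eq_zero hG Real.sigmoid_monotone.measurable
    (eq_empty_of_forall_notMem fun y => (Real.sigmoid_pos y).not_ge)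

lemma utilityT_sigmoid_one (hG : G ∈ m0Set) : utilityT Real.sigmoid G 1 = 1 :=
  utilityT_eq_one hG Real.sigmoid_monotone.measurable (eq_univ_of_forall Real.sigmoid_le_one)

lemma utilityT_sigmoid_sigmoid (hp : p ∈ Icc 0 1) : utilityT Real.sigmoid Real.sigmoid p = p := by
  rcases eq_endpoints_or_mem_Ioo_of_mem_Icc hp with rfl | rfl | hp
  · exact utilityT_sigmoid_zero sigmoid_mem_m0Set
  · exact utilityT_sigmoid_one sigmoid_mem_m0Set
  · obtain ⟨y, rfl⟩ := Real.range_sigmoid.ge hp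
    exact utilityT_apply_of_strictMono sigmoid_mem_m0Set Real.sigmoid_strictMono y

lemma utilityT_leftQ_comp_sigmoid_sigmoid (hF : F ∈ m0Set) :
    utilityT (leftQ F ∘ Real.sigmoid) Real.sigmoid = F := by
  rw [utilityT_leftQ_comp hF sigmoid_mem_m0Set Real.sigmoid_monotone sigmoid_mem_Ioo]
  exact funext fun x => utilityT_sigmoid_sigmoid (mem_Icc_of_mem_m0Set hF x)

lemma tendsto_utilityT_sigmoid_nhdsLT_one (hG : G ∈ m0Set) :
    Tendsto (utilityT Real.sigmoid G) (𝓝[<] 1) (𝓝 1) := by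
  have hmono := (utilityT_mem_m0Set hG Real.sigmoid_monotone.measurable).1
  have hsigmoid : Tendsto Real.sigmoid atTop (𝓝[<] 1) :=
    tendsto_nhdsWithin_iff.2 ⟨Real.tendsto_sigmoid_atTop, .of_forall Real.sigmoid_lt_one⟩
  have hcomp : Tendsto (utilityT Real.sigmoid G ∘ Real.sigmoid) atTop (𝓝 1) :=
    hG.2.2.2.congr fun y => (utilityT_apply_of_strictMono hG Real.sigmoid_strictMono y).symm
  have hleft := hmono.tendsto_leftLim 1
  have hleft_eq : Function.leftLim (utilityT Real.sigmoid G) 1 = 1 :=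
    tendsto_nhds_unique (hleft.comp hsigmoid) hcomp
  rwa [hleft_eq] at hleft

end Logistic

section Distortion

variable {d F G : ℝ → ℝ}

lemma dfRightCts_of_mem_m0Set (hd : d ∈ m0Set) : DFRightCts d :=
  fun x _ => (hd.2.1 x).mono Ioi_subset_Ici_self

lemma isDFhat_utilityT_sigmoid (hG : G ∈ m0Set) : IsDFhat (utilityT Real.sigmoid G) := by
  have hd := utilityT_mem_m0Set hG Real.sigmoid_monotone.measurable
  have hd0 := utilityT_sigmoid_zero hG
  refine ⟨⟨hd.1.monotoneOn _, hd0, utilityT_sigmoid_one hG⟩, ?_,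
    tendsto_utilityT_sigmoid_nhdsLT_one hG⟩
  simpa only [ContinuousWithinAt, hd0] using
    dfRightCts_of_mem_m0Set hd 0 (left_mem_Ico.2 zero_lt_one)

lemma DFRightCts.continuousWithinAt_Icc (hd : DFRightCts d) {p : ℝ} (hp : p ∈ Icc 0 1) :
    ContinuousWithinAt d (Icc p 1) p := by
  rcases hp.2.lt_or_eq with hlt | rfl
  · exact (continuousWithinAt_Ioi_iff_Ici.1 (hd p ⟨hp.1, hlt⟩)).mono Icc_subset_Ici_self
  · rw [Icc_self]
    exact continuousWithinAt_singleton

lemma distortT_eq_comp (hd : DFRightCts d) (hF : F ∈ m0Set) : distortT d F = d ∘ F := by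
  ext x
  have hmaps : MapsTo F (Ici x) (Icc (F x) 1) :=
    fun y hy => ⟨hF.1 hy, (mem_Icc_of_mem_m0Set hF y).2⟩
  have hcont : ContinuousWithinAt (d ∘ F) (Ici x) x :=
    (hd.continuousWithinAt_Icc (mem_Icc_of_mem_m0Set hF x)).comp (hF.2.1 x) hmaps
  exact hcont.rightLim_eq

end Distortion

/-- A map `T : M₀ → M₀` commutes with the utility transform `T^u` for every
increasing left-continuous `u : ℝ → ℝ` if and only if `T = T_d` for some
right-continuous distortion function `d` with `d(0+) = 0` and `d(1-) = 1`. -/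
theorem stmt10 (T : (ℝ → ℝ) → ℝ → ℝ) (hT : ∀ F ∈ m0Set, T F ∈ m0Set) :
    (∀ u : ℝ → ℝ, IsLeftCtsIncr u → ∀ F ∈ m0Set,
        T (utilityT u F) = utilityT u (T F)) ↔
      ∃ d : ℝ → ℝ, IsDFhat d ∧ DFRightCts d ∧ ∀ F ∈ m0Set, T F = distortT d F := by
  constructor
  · intro hcomm
    have hTL : T Real.sigmoid ∈ m0Set := hT _ sigmoid_mem_m0Set
    have hright : DFRightCts (utilityT Real.sigmoid (T Real.sigmoid)) :=
      dfRightCts_of_mem_m0Set (utilityT_mem_m0Set hTL Real.sigmoid_monotone.measurable)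
    refine ⟨_, isDFhat_utilityT_sigmoid hTL, hright, fun F hF => ?_⟩
    have hu : IsLeftCtsIncr (leftQ F ∘ Real.sigmoid) :=
      isLeftCtsIncr_leftQ_comp hF isLeftCtsIncr_sigmoid sigmoid_mem_Ioo
    calc T F = T (utilityT (leftQ F ∘ Real.sigmoid) Real.sigmoid) := by
          rw [utilityT_leftQ_comp_sigmoid_sigmoid hF]
      _ = utilityT (leftQ F ∘ Real.sigmoid) (T Real.sigmoid) := hcomm _ hu _ sigmoid_mem_m0Set
      _ = utilityT Real.sigmoid (T Real.sigmoid) ∘ F :=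
          utilityT_leftQ_comp hF hTL Real.sigmoid_monotone sigmoid_mem_Ioo
      _ = distortT _ F := (distortT_eq_comp hright hF).symm
  · rintro ⟨d, hd, hright, hTd⟩ u hu F hF
    have hT_eq : ∀ G ∈ m0Set, T G = d ∘ G :=
      fun G hG => (hTd G hG).trans (distortT_eq_comp hright hG)
    rw [hT_eq _ (utilityT_mem_m0Set hF hu.1.measurable), hT_eq F hF,
      utilityT_comp hd.1.2.1 hd.1.2.2 hu hF (hT_eq F hF ▸ hT F hF)]
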